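/- Fourth-order two-body error term (paper eq. A17b): for i ≠ j and any phase-space point (x,p) with r_ij ≠ 0, the left-nested canonical Poisson bracket satisfies {{{{V_ij, T}, T}, T}, V_ij}(x,p) = −9 (G² (m i)(m j)((m i)+(m j)) / r_ij⁸) · ( 3 (v_ij · x_ij)² − r_ij² ‖v_ij‖² ). -/

import Mathlib

open scoped RealInnerProductSpace BigOperators

noncomputable section

/-- Three-dimensional Euclidean space. -/
abbrev E3 : Type := EuclideanSpace ℝ (Fin 3)

/-- Phase space for `N` particles: positions and momenta. -/
abbrev Phase (N : ℕ) : Type := (Fin N → E3) × (Fin N → E3)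

/-- Gradient of a phase-space function with respect to the `k`-th position. -/
def gradPos {N : ℕ} (A : Phase N → ℝ) (k : Fin N) (w : Phase N) : E3 :=
  gradient (fun y => A (Function.update w.1 k y, w.2)) (w.1 k)

/-- Gradient of a phase-space function with respect to the `k`-th momentum. -/
def gradMom {N : ℕ} (A : Phase N → ℝ) (k : Fin N) (w : Phase N) : E3 :=
  gradient (fun y => A (w.1, Function.update w.2 k y)) (w.2 k)

/-- Canonical Poisson bracket of two phase-space functions. -/
def poisson {N : ℕ} (A B : Phase N → ℝ) (w : Phase N) : ℝ :=
  ∑ k, (⟪gradPos A k w, gradMom B k w⟫ - ⟪gradMom A k w, gradPos B k w⟫)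

/-- Kinetic energy `T = Σ_i ‖p_i‖²/(2 m_i)`. -/
def kinetic {N : ℕ} (m : Fin N → ℝ) (w : Phase N) : ℝ :=
  ∑ i, ‖w.2 i‖ ^ 2 / (2 * m i)

/-- Pair potential `V_ij = −G m_i m_j / ‖x_i − x_j‖`. -/
def pairPot {N : ℕ} (G : ℝ) (m : Fin N → ℝ) (i j : Fin N) (w : Phase N) : ℝ :=
  -(G * m i * m j) / ‖w.1 i - w.1 j‖


theorem grad_of_fderiv {f : E3 → ℝ} {f' : E3 →L[ℝ] ℝ} {g x : E3} (h : HasFDerivAt f f' x)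
    (hg : ∀ y, f' y = ⟪g, y⟫) : HasGradientAt f g x := by
  rw [hasGradientAt_iff_hasFDerivAt]
  refine h.congr_fderiv ?_
  ext1 y
  simp [hg]

/-- Sign of particle `k` in the relative coordinate. -/
def cc {N : ℕ} (i j k : Fin N) : ℝ := (if k = i then 1 else 0) - (if k = j then 1 else 0)

theorem upd_diff {N : ℕ} (i j k : Fin N) (a : Fin N → ℝ) (x : Fin N → E3) (y : E3) :
    a i • Function.update x k y i - a j • Function.update x k y j
      = (a i • x i - a j • x j) + (cc i j k * a k) • (y - x k) := by
  unfold cc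
  by_cases h1 : k = i
  · subst h1
    by_cases h2 : k = j
    · subst h2; simp
    · have h2' : j ≠ k := fun h => h2 h.symm
      simp [h2, h2', smul_sub]; try abel
  · have h1' : i ≠ k := fun h => h1 h.symm
    by_cases h2 : k = j
    · subst h2; simp [h1, h1', smul_sub]; try abel
    · have h2' : j ≠ k := fun h => h2 h.symm
      simp [h1, h2, h1', h2']

theorem grad_affine {f : E3 → ℝ} {g b x0 : E3} (c : ℝ) (h : HasGradientAt f g b) :
    HasGradientAt (fun y => f (b + c • (y - x0))) (c • g) x0 := by
  have h1 : HasFDerivAt (fun y : E3 => b + c • (y - x0)) (c • ContinuousLinearMap.id ℝ E3) x0 :=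
    (((hasFDerivAt_id x0).sub_const x0).const_smul c).const_add b
  have h2 : HasFDerivAt f (InnerProductSpace.toDual ℝ E3 g) (b + c • (x0 - x0)) := by
    simpa using h.hasFDerivAt
  refine grad_of_fderiv (h2.comp x0 h1) ?_
  intro y
  simp [real_inner_smul_left]

theorem gradPos_of {N : ℕ} (m : Fin N → ℝ) (i j : Fin N) (A : Phase N → ℝ) (F : E3 → E3 → ℝ)
    (hA : ∀ w : Phase N, w.1 i - w.1 j ≠ 0 →
      A w = F (w.1 i - w.1 j) ((m i)⁻¹ • w.2 i - (m j)⁻¹ • w.2 j))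
    (w : Phase N) (hw : w.1 i - w.1 j ≠ 0) (g : E3)
    (hF : HasGradientAt (fun x => F x ((m i)⁻¹ • w.2 i - (m j)⁻¹ • w.2 j)) g (w.1 i - w.1 j))
    (k : Fin N) : gradPos A k w = cc i j k • g := by
  unfold gradPos
  apply HasGradientAt.gradient
  have h := grad_affine (x0 := w.1 k) (cc i j k) hF
  have hu : ∀ y, Function.update w.1 k y i - Function.update w.1 k y j
      = (w.1 i - w.1 j) + cc i j k • (y - w.1 k) := by
    intro y
    simpa using upd_diff i j k (fun _ => 1) w.1 y
  have hc : ContinuousAt (fun y => (w.1 i - w.1 j) + cc i j k • (y - w.1 k)) (w.1 k) := by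
    fun_prop
  have he := hc.eventually_ne (y := 0) (by simpa using hw)
  refine h.congr_of_eventuallyEq ?_
  filter_upwards [he] with y hy
  rw [hA _ (by simpa only [hu] using hy)]
  simp only [hu]

theorem gradMom_of {N : ℕ} (m : Fin N → ℝ) (i j : Fin N) (A : Phase N → ℝ) (F : E3 → E3 → ℝ)
    (hA : ∀ w : Phase N, w.1 i - w.1 j ≠ 0 →
      A w = F (w.1 i - w.1 j) ((m i)⁻¹ • w.2 i - (m j)⁻¹ • w.2 j))
    (w : Phase N) (hw : w.1 i - w.1 j ≠ 0) (g : E3)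
    (hF : HasGradientAt (fun v => F (w.1 i - w.1 j) v) g ((m i)⁻¹ • w.2 i - (m j)⁻¹ • w.2 j))
    (k : Fin N) : gradMom A k w = (cc i j k * (m k)⁻¹) • g := by
  unfold gradMom
  apply HasGradientAt.gradient
  have h := grad_affine (x0 := w.2 k) (cc i j k * (m k)⁻¹) hF
  have hu := upd_diff i j k (fun l => (m l)⁻¹) w.2
  refine h.congr_of_eventuallyEq (Filter.Eventually.of_forall fun y => ?_)
  simp only [hA (w.1, Function.update w.2 k y) hw, hu]

theorem gradMom_kinetic {N : ℕ} (m : Fin N → ℝ) (w : Phase N) (k : Fin N) :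
    gradMom (kinetic m) k w = (m k)⁻¹ • w.2 k := by
  unfold gradMom kinetic
  apply HasGradientAt.gradient
  have h : ∀ l ∈ Finset.univ, HasFDerivAt (fun y : E3 => ‖Function.update w.2 k y l‖ ^ 2 / (2 * m l))
      (if l = k then (m k)⁻¹ • innerSL ℝ (w.2 k) else 0) (w.2 k) := by
    intro l _
    by_cases hl : l = k
    · subst hl
      simp only [Function.update_self, if_true, div_eq_mul_inv]
      refine ((hasStrictFDerivAt_norm_sq (w.2 l)).hasFDerivAt.mul_const
        (2 * m l)⁻¹).congr_fderiv ?_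
      ext1 y
      simp
      ring
    · simp only [Function.update_of_ne hl, if_neg hl]
      exact hasFDerivAt_const _ _
  refine grad_of_fderiv (HasFDerivAt.fun_sum h) ?_
  intro y
  simp [real_inner_smul_left]

theorem gradPos_kinetic {N : ℕ} (m : Fin N → ℝ) (w : Phase N) (k : Fin N) :
    gradPos (kinetic m) k w = 0 := by
  unfold gradPos kinetic
  apply HasGradientAt.gradient
  dsimp only
  refine grad_of_fderiv (hasFDerivAt_const _ _) fun y => ?_
  simp

theorem cc_sum {N : ℕ} (i j : Fin N) (f : Fin N → ℝ) :
    ∑ k, cc i j k * f k = f i - f j := by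
  simp [cc, sub_mul, Finset.sum_sub_distrib]

theorem poisson_kin {N : ℕ} (m : Fin N → ℝ) (i j : Fin N) (A : Phase N → ℝ) (F F' : E3 → E3 → ℝ)
    (g : E3 → E3 → E3)
    (hA : ∀ w : Phase N, w.1 i - w.1 j ≠ 0 →
      A w = F (w.1 i - w.1 j) ((m i)⁻¹ • w.2 i - (m j)⁻¹ • w.2 j))
    (hF : ∀ x v, x ≠ 0 → HasGradientAt (fun x => F x v) (g x v) x)
    (hF' : ∀ x v, x ≠ 0 → ⟪g x v, v⟫ = F' x v)
    (w : Phase N) (hw : w.1 i - w.1 j ≠ 0) :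
    poisson A (kinetic m) w =
      F' (w.1 i - w.1 j) ((m i)⁻¹ • w.2 i - (m j)⁻¹ • w.2 j) := by
  unfold poisson
  rw [← hF' _ _ hw]
  simp only [gradPos_of m i j A F hA w hw _ (hF _ _ hw), gradPos_kinetic, gradMom_kinetic,
    inner_zero_right, sub_zero, real_inner_smul_left]
  rw [cc_sum, inner_sub_right]

theorem fd_u {x : E3} (hx : x ≠ 0) :
    HasFDerivAt (fun x : E3 => ‖x‖⁻¹) (-(‖x‖⁻¹ ^ 3) • innerSL ℝ x) x := by
  have h0 : ‖x‖ ≠ 0 := norm_ne_zero_iff.mpr hx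
  have h1 : HasFDerivAt (fun x : E3 => ‖x‖) (‖x‖⁻¹ • innerSL ℝ x) x := by
    have h := (hasStrictFDerivAt_norm_sq x).hasFDerivAt.sqrt (by positivity)
    simp only [Real.sqrt_sq (norm_nonneg _)] at h
    refine h.congr_fderiv ?_
    ext1 y
    simp
    field_simp
  refine ((hasDerivAt_inv h0).comp_hasFDerivAt x h1).congr_fderiv ?_
  ext1 y
  simp
  field_simp

theorem fd_s (x v : E3) : HasFDerivAt (fun x : E3 => ⟪v, x⟫) (innerSL ℝ v) x :=
  (innerSL ℝ v).hasFDerivAt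

theorem fd_s' (x v : E3) : HasFDerivAt (fun v : E3 => ⟪v, x⟫) (innerSL ℝ x) v := by
  simp only [real_inner_comm x]
  exact (innerSL ℝ x).hasFDerivAt

theorem fourth_order_VTTTV {N : ℕ} (G : ℝ) (hG : 0 < G) (m : Fin N → ℝ)
    (hm : ∀ i, 0 < m i) (i j : Fin N) (hij : i ≠ j) (w : Phase N)
    (hr : ‖w.1 i - w.1 j‖ ≠ 0) (xij vij : E3)
    (hx : xij = w.1 i - w.1 j)
    (hv : vij = (m i)⁻¹ • w.2 i - (m j)⁻¹ • w.2 j) :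
    poisson (poisson (poisson (poisson (pairPot G m i j) (kinetic m))
        (kinetic m)) (kinetic m)) (pairPot G m i j) w =
      -9 * (G ^ 2 * m i * m j * (m i + m j) / ‖xij‖ ^ 8) *
        (3 * ⟪vij, xij⟫ ^ 2 - ‖xij‖ ^ 2 * ‖vij‖ ^ 2) := by
  have hw : w.1 i - w.1 j ≠ 0 := norm_ne_zero_iff.mp hr
  obtain ⟨K, hK⟩ : ∃ K, K = G * m i * m j := ⟨_, rfl⟩
  have h0 : ∀ w : Phase N, w.1 i - w.1 j ≠ 0 → pairPot G m i j w =
      (fun x _ : E3 => (-K) * ‖x‖⁻¹) (w.1 i - w.1 j)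
        ((m i)⁻¹ • w.2 i - (m j)⁻¹ • w.2 j) := by
    intro w _
    simp only [pairPot, hK, div_eq_mul_inv]
  have g0 : ∀ x v : E3, x ≠ 0 → HasGradientAt (fun x : E3 => (-K) * ‖x‖⁻¹)
      ((K * ‖x‖⁻¹ ^ 3) • x) x := by
    intro x v hx
    refine grad_of_fderiv ((fd_u hx).const_mul (-K)) fun y => ?_
    simp [real_inner_smul_left]
    try ring
  have h1 := poisson_kin m i j _ _ (fun x v : E3 => K * (⟪v, x⟫ * ‖x‖⁻¹ ^ 3))
    (fun x v => (K * ‖x‖⁻¹ ^ 3) • x) h0 g0 (by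
      intro x v _
      simp only [real_inner_smul_left, real_inner_comm v x]
      ring)
  have h2 := poisson_kin m i j _ _
    (fun x v : E3 => K * (‖v‖ ^ 2 * ‖x‖⁻¹ ^ 3 - 3 * (⟪v, x⟫ ^ 2 * ‖x‖⁻¹ ^ 5)))
    (fun x v => (K * ‖x‖⁻¹ ^ 3) • v - (3 * K * ⟪v, x⟫ * ‖x‖⁻¹ ^ 5) • x) h1 (by
      intro x v hx
      refine grad_of_fderiv (((fd_s x v).mul ((fd_u hx).pow 3)).const_mul K) fun y => ?_
      simp [real_inner_smul_left, inner_sub_left]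
      ring) (by
      intro x v _
      simp only [real_inner_smul_left, inner_sub_left, real_inner_comm v x,
        real_inner_self_eq_norm_sq]
      ring)
  have h3 := poisson_kin m i j _ _
    (fun x v : E3 => K * (15 * (⟪v, x⟫ ^ 3 * ‖x‖⁻¹ ^ 7) - 9 * (‖v‖ ^ 2 * ⟪v, x⟫ * ‖x‖⁻¹ ^ 5)))
    (fun x v => (-3 * K * ‖v‖ ^ 2 * ‖x‖⁻¹ ^ 5 + 15 * K * ⟪v, x⟫ ^ 2 * ‖x‖⁻¹ ^ 7) • x
      - (6 * K * ⟪v, x⟫ * ‖x‖⁻¹ ^ 5) • v) h2 (by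
      intro x v hx
      refine grad_of_fderiv (((((fd_u hx).pow 3).const_mul (‖v‖ ^ 2)).sub
        ((((fd_s x v).pow 2).mul ((fd_u hx).pow 5)).const_mul 3)).const_mul K) fun y => ?_
      simp [real_inner_smul_left, inner_sub_left]
      ring) (by
      intro x v _
      simp only [real_inner_smul_left, inner_sub_left, real_inner_comm v x,
        real_inner_self_eq_norm_sq]
      ring)
  have g3 : ∀ x v : E3, HasGradientAt
      (fun v : E3 => K * (15 * (⟪v, x⟫ ^ 3 * ‖x‖⁻¹ ^ 7) - 9 * (‖v‖ ^ 2 * ⟪v, x⟫ * ‖x‖⁻¹ ^ 5)))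
      ((K * (45 * ⟪v, x⟫ ^ 2 * ‖x‖⁻¹ ^ 7 - 9 * ‖v‖ ^ 2 * ‖x‖⁻¹ ^ 5)) • x
        - (18 * K * ⟪v, x⟫ * ‖x‖⁻¹ ^ 5) • v) v := by
    intro x v
    refine grad_of_fderiv ((((((fd_s' x v).pow 3).mul_const (‖x‖⁻¹ ^ 7)).const_mul 15).sub
      ((((hasStrictFDerivAt_norm_sq v).hasFDerivAt.mul (fd_s' x v)).mul_const
        (‖x‖⁻¹ ^ 5)).const_mul 9)).const_mul K) fun y => ?_
    simp [real_inner_smul_left, inner_sub_left]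
    ring
  have gV : ∀ k, gradMom (pairPot G m i j) k w = 0 := by
    intro k
    unfold gradMom pairPot
    apply HasGradientAt.gradient
    dsimp only
    refine grad_of_fderiv (hasFDerivAt_const _ _) fun y => ?_
    simp
  unfold poisson
  change ∑ k, (⟪gradPos (poisson (poisson (poisson (pairPot G m i j) (kinetic m))
        (kinetic m)) (kinetic m)) k w, gradMom (pairPot G m i j) k w⟫
      - ⟪gradMom (poisson (poisson (poisson (pairPot G m i j) (kinetic m))
        (kinetic m)) (kinetic m)) k w, gradPos (pairPot G m i j) k w⟫) = _
  have q3 := gradMom_of m i j _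
    (fun x v : E3 => K * (15 * (⟪v, x⟫ ^ 3 * ‖x‖⁻¹ ^ 7) - 9 * (‖v‖ ^ 2 * ⟪v, x⟫ * ‖x‖⁻¹ ^ 5))) h3 w hw _ (g3 _ _)
  have q0 := gradPos_of m i j _ (fun x _ : E3 => (-K) * ‖x‖⁻¹) h0 w hw _ (g0 _ 0 hw)
  simp only [gV, inner_zero_right, zero_sub, q3, q0]
  rw [← hx, ← hv]
  have hX : ‖xij‖ ≠ 0 := by rw [hx]; exact hr
  have hmi := (hm i).ne'
  have hmj := (hm j).ne'
  simp only [real_inner_smul_left, real_inner_smul_right, inner_sub_left,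
    real_inner_self_eq_norm_sq, mul_assoc, Finset.sum_neg_distrib]
  rw [cc_sum]
  have e1 : cc i j i = 1 := by simp [cc, hij]
  have e2 : cc i j j = -1 := by simp [cc, hij.symm]
  rw [e1, e2, hK]
  field_simp
  ring
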